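/- arXiv:2501.10896 — 2 statements merged into one kernel-verified Lean document; each statement's English description precedes it below -/
import Mathlib

section
/- Let W(y|x,s,j) be a state-dependent AVC over finite alphabets with fixed state distribution Q_S, and suppose the graph of the averaged channel Q_{Y|XJ}(y|x,j) = Σ_s Q_S(s)W(y|x,s,j) is complete-𝒳 (no pair of inputs is isolated). Then for every (n,R) code with at least two messages, max_{j^n∈𝒥^n, m∈ℳ} e(m,j^n) ≥ 1/2, where e(m,j^n) = Σ_{y^n∉g^{−1}(m)} Σ_{s^n} Q_S^n(s^n) Π_{i=1}^n W(y_i|x_i(m),s_i,j_i). -/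
/-!
The jammer hides which of two messages `m₁ ≠ m₂` was sent. No letter pair `(x_t(m₁), x_t(m₂))` is
isolated, so by compactness there are jamming laws `p_t`, `r_t` giving the two letters the same
averaged output law. If the jammer draws `j^n` from `∏ p_t` when `m₁` is sent and from `∏ r_t` when
`m₂` is sent, then both messages induce the same law on `Y^n`. The decoding sets of `m₁` and `m₂`
are disjoint, so the two averaged error probabilities add up to at least `1`; one of them is at
least `1/2`, and so is the error for some deterministic `j^n`.
-/

open scoped BigOperators

noncomputable section

section Common

variable {Ω α β γ : Type*}

/-- Shannon entropy (in bits) of a finitely supported distribution. -/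
def Hent [Fintype α] (p : α → ℝ) : ℝ := -∑ a, p a * Real.logb 2 (p a)

/-- Marginal (pushforward) of a joint law `p` along the map `f`. -/
def marg [Fintype Ω] [DecidableEq α] (p : Ω → ℝ) (f : Ω → α) : α → ℝ :=
  fun a => ∑ ω, if f ω = a then p ω else 0

/-- Entropy of the marginal of `p` along `f`. -/
def Hm [Fintype Ω] [Fintype α] [DecidableEq α] (p : Ω → ℝ) (f : Ω → α) : ℝ :=
  Hent (marg p f)

/-- Mutual information `I(f;g)` under the joint law `p`. -/
def mInfo [Fintype Ω] [Fintype α] [Fintype β] [DecidableEq α] [DecidableEq β]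
    (p : Ω → ℝ) (f : Ω → α) (g : Ω → β) : ℝ :=
  Hm p f + Hm p g - Hm p fun ω => (f ω, g ω)

/-- Conditional mutual information `I(f;g∣h)` under the joint law `p`. -/
def cmInfo [Fintype Ω] [Fintype α] [Fintype β] [Fintype γ]
    [DecidableEq α] [DecidableEq β] [DecidableEq γ]
    (p : Ω → ℝ) (f : Ω → α) (g : Ω → β) (h : Ω → γ) : ℝ :=
  (Hm p fun ω => (f ω, h ω)) + (Hm p fun ω => (g ω, h ω)) - Hm p h -
    Hm p fun ω => (f ω, g ω, h ω)

/-- Conditional entropy `H(f ∣ g)` under the joint law `p`. -/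
def cHent [Fintype Ω] [Fintype α] [Fintype β] [DecidableEq α] [DecidableEq β]
    (p : Ω → ℝ) (f : Ω → α) (g : Ω → β) : ℝ :=
  (Hm p fun ω => (f ω, g ω)) - Hm p g

/-- `p` is a probability mass function on the finite type `α`. -/
def IsPMF [Fintype α] (p : α → ℝ) : Prop := (∀ a, 0 ≤ p a) ∧ ∑ a, p a = 1

/-- `K` is a stochastic matrix (kernel) from `α` to `β`. -/
def IsKernel [Fintype β] (K : α → β → ℝ) : Prop := ∀ a, IsPMF (K a)

/-- The type of probability mass functions on `α`. -/
abbrev PMFt (α : Type*) [Fintype α] := {p : α → ℝ // IsPMF p}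

/-- The type of stochastic matrices from `α` to `β`. -/
abbrev Kernelt (α β : Type*) [Fintype β] := {K : α → β → ℝ // IsKernel K}

/-- Kullback–Leibler divergence (in bits). -/
def KLdiv [Fintype α] (p q : α → ℝ) : ℝ := ∑ a, p a * Real.logb 2 (p a / q a)

/-- Empirical distribution (type) of a sequence. -/
def emp {n : ℕ} [DecidableEq α] (x : Fin n → α) : α → ℝ :=
  fun a => (n : ℝ)⁻¹ * ∑ i, if x i = a then 1 else 0

end Common

section Mixture

variable {α β : Type*} [Fintype α]

/-- The mixture `∑ a, p a • V a` of the family `V`: the output law of the channel `V` when the input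
has law `p`. -/
def mixture (p : α → ℝ) (V : α → β → ℝ) : β → ℝ := fun b => ∑ a, p a * V a b

protected lemma IsPMF.mixture [Fintype β] {p : α → ℝ} {V : α → β → ℝ} (hp : IsPMF p)
    (hV : IsKernel V) : IsPMF (mixture p V) := by
  refine ⟨fun b => Finset.sum_nonneg fun a _ => mul_nonneg (hp.1 a) ((hV a).1 b), ?_⟩
  calc ∑ b, ∑ a, p a * V a b = ∑ a, p a * ∑ b, V a b := by
        rw [Finset.sum_comm]; simp only [Finset.mul_sum]
    _ = 1 := by simp only [(hV _).2, mul_one, hp.2]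

lemma IsPMF.exists_le_of_le_sum_mul {p : α → ℝ} (hp : IsPMF p) {e : α → ℝ} {c : ℝ}
    (hc : c ≤ ∑ a, p a * e a) : ∃ a, c ≤ e a := by
  by_contra! he
  exact hc.not_gt ((convex_Iio c).sum_mem (fun a _ => hp.1 a) hp.2 fun a _ => he a)

end Mixture

section ProductDist

variable {ι : Type*} {α β : ι → Type*} [Fintype ι]

/-- The joint law of independent coordinates, the `i`-th of which has law `p i`. -/
def productDist (p : ∀ i, α i → ℝ) : (∀ i, α i) → ℝ := fun a => ∏ i, p i (a i)

variable [DecidableEq ι] [∀ i, Fintype (α i)]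

protected lemma IsPMF.productDist {p : ∀ i, α i → ℝ} (hp : ∀ i, IsPMF (p i)) :
    IsPMF (productDist p) := by
  refine ⟨fun a => Finset.prod_nonneg fun i _ => (hp i).1 (a i), ?_⟩
  calc ∑ a : ∀ i, α i, ∏ i, p i (a i) = ∏ i, ∑ a, p i a := (Fintype.prod_sum p).symm
    _ = 1 := Finset.prod_eq_one fun i _ => (hp i).2

lemma productDist_mixture (p : ∀ i, α i → ℝ) (V : ∀ i, α i → β i → ℝ) :
    productDist (fun i => mixture (p i) (V i)) =
      mixture (productDist p) fun a => productDist fun i => V i (a i) := by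
  funext b
  simp only [productDist, mixture, Fintype.prod_sum, Finset.prod_mul_distrib]

end ProductDist

section MissProb

variable {α β Ω M : Type*} [Fintype α] [Fintype β] [Fintype Ω] [DecidableEq M]

/-- The probability, under the law `P` of the observation, that the decision `g` is not `m`. -/
def missProb (P : Ω → ℝ) (g : Ω → M) (m : M) : ℝ := ∑ ω, (if g ω = m then 0 else 1) * P ω

lemma missProb_mixture (p : α → ℝ) (V : α → Ω → ℝ) (g : Ω → M) (m : M) :
    missProb (mixture p V) g m = ∑ a, p a * missProb (V a) g m := by
  simp only [missProb, mixture, Finset.mul_sum]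
  rw [Finset.sum_comm]
  simp only [mul_left_comm]

lemma IsPMF.one_le_missProb_add_missProb {P : Ω → ℝ} (hP : IsPMF P) (g : Ω → M) {m₁ m₂ : M}
    (hm : m₁ ≠ m₂) : 1 ≤ missProb P g m₁ + missProb P g m₂ := by
  have one_le (ω : Ω) :
      (1 : ℝ) ≤ (if g ω = m₁ then 0 else 1) + (if g ω = m₂ then 0 else 1) := by
    split_ifs with h₁ h₂
    · exact absurd (h₁.symm.trans h₂) hm
    all_goals norm_num
  calc (1 : ℝ) = ∑ ω, P ω := hP.2.symm
    _ ≤ ∑ ω, ((if g ω = m₁ then 0 else 1) + (if g ω = m₂ then 0 else 1)) * P ω :=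
        Finset.sum_le_sum fun ω _ => le_mul_of_one_le_left (hP.1 ω) (one_le ω)
    _ = missProb P g m₁ + missProb P g m₂ := by
        simp only [missProb, add_mul, Finset.sum_add_distrib]

lemma exists_half_le_missProb_of_mixture_eq {p : α → ℝ} {r : β → ℝ} {V : α → Ω → ℝ}
    {U : β → Ω → ℝ} (hp : IsPMF p) (hr : IsPMF r) (hV : IsKernel V)
    (h : mixture p V = mixture r U) (g : Ω → M) {m₁ m₂ : M} (hm : m₁ ≠ m₂) :
    (∃ a, 1 / 2 ≤ missProb (V a) g m₁) ∨ ∃ b, 1 / 2 ≤ missProb (U b) g m₂ := by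
  have hsum := (hp.mixture hV).one_le_missProb_add_missProb g hm
  have hhalf : 1 / 2 ≤ missProb (mixture p V) g m₁ ∨ 1 / 2 ≤ missProb (mixture p V) g m₂ := by
    by_contra! hlt
    linarith
  refine hhalf.imp (fun h₁ => ?_) fun h₂ => ?_
  · exact hp.exists_le_of_le_sum_mul (h₁.trans_eq (missProb_mixture p V g m₁))
  · rw [h, missProb_mixture] at h₂
    exact hr.exists_le_of_le_sum_mul h₂

end MissProb

section Channel

variable {X S J Y T M : Type*}

/-- The averaged channel `Q_{Y|XJ}(y|x,j) = ∑ s, Q_S(s) W(y|x,s,j)`. -/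
def averagedChannel [Fintype S] (W : X → S → J → Y → ℝ) (Qs : S → ℝ) : X → J → Y → ℝ :=
  fun x j => mixture Qs fun s => W x s j

/-- The inputs `x₁`, `x₂` of the channel `V` are isolated: no jamming laws make their output laws
arbitrarily close in `ℓ¹`. Over an empty `J` the infimum has the junk value `0`. -/
def IsIsolated [Fintype J] [Fintype Y] (V : X → J → Y → ℝ) (x₁ x₂ : X) : Prop :=
  0 < ⨅ qq : PMFt J × PMFt J, ∑ y, |∑ j, V x₁ j y * qq.1.1 j - ∑ j, V x₂ j y * qq.2.1 j|

lemma exists_mixture_eq_of_not_isIsolated [Fintype J] [Nonempty J] [Fintype Y]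
    {V : X → J → Y → ℝ} {x₁ x₂ : X} (h : ¬ IsIsolated V x₁ x₂) :
    ∃ p r : PMFt J, mixture p.1 (V x₁) = mixture r.1 (V x₂) := by
  classical
  have : CompactSpace (PMFt J) := isCompact_iff_compactSpace.mp (isCompact_stdSimplex ℝ J)
  have : Nonempty (PMFt J) := ⟨_, single_mem_stdSimplex ℝ (Classical.arbitrary J)⟩
  let dist₁ : PMFt J × PMFt J → ℝ := fun qq =>
    ∑ y, |∑ j, V x₁ j y * qq.1.1 j - ∑ j, V x₂ j y * qq.2.1 j|
  have weight_continuous (j : J) : Continuous fun q : PMFt J => q.1 j :=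
    (continuous_apply j).comp continuous_subtype_val
  have dist₁_continuous : Continuous dist₁ :=
    continuous_finsetSum _ fun y _ => Continuous.abs <| Continuous.sub
      (continuous_finsetSum _ fun j _ =>
        continuous_const.mul ((weight_continuous j).comp continuous_fst))
      (continuous_finsetSum _ fun j _ =>
        continuous_const.mul ((weight_continuous j).comp continuous_snd))
  obtain ⟨⟨p, r⟩, -, hmin⟩ :=
    isCompact_univ.exists_isMinOn Set.univ_nonempty dist₁_continuous.continuousOn
  have hzero : dist₁ (p, r) = 0 :=
    le_antisymm ((le_ciInf fun qq => hmin (Set.mem_univ qq)).trans (not_lt.mp h))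
      (Finset.sum_nonneg fun _ _ => abs_nonneg _)
  refine ⟨p, r, funext fun y => ?_⟩
  have hy := (Finset.sum_eq_zero_iff_of_nonneg fun _ _ => abs_nonneg _).mp hzero y
    (Finset.mem_univ y)
  simpa only [mixture, mul_comm] using sub_eq_zero.mp (abs_eq_zero.mp hy)

variable [Fintype S] [Fintype Y] [Fintype T] [DecidableEq T] [DecidableEq M]

/-- The error probability `e(m, j^n)` of the decoder `g` when the codeword `x` of `m` is sent under
the jamming sequence `j`; `T` is the set of channel uses. -/
def errorProb (W : X → S → J → Y → ℝ) (Qs : S → ℝ) (x : T → X) (g : (T → Y) → M) (m : M)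
    (j : T → J) : ℝ :=
  ∑ y : T → Y, ∑ s : T → S, (if g y = m then 0 else 1) *
    ((∏ t, Qs (s t)) * ∏ t, W (x t) (s t) (j t) (y t))

lemma errorProb_eq_missProb (W : X → S → J → Y → ℝ) (Qs : S → ℝ) (x : T → X) (g : (T → Y) → M)
    (m : M) (j : T → J) :
    errorProb W Qs x g m j =
      missProb (productDist fun t => averagedChannel W Qs (x t) (j t)) g m := by
  simp only [averagedChannel, productDist_mixture]
  simp only [errorProb, missProb, mixture, productDist, Finset.mul_sum]

theorem stmt9_general [Fintype J] [Nonempty J] (W : X → S → J → Y → ℝ) (Qs : S → ℝ)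
    (hW : ∀ x s j, IsPMF (W x s j)) (hQs : IsPMF Qs) (xc : M → T → X) (g : (T → Y) → M)
    {m₁ m₂ : M} (hm : m₁ ≠ m₂)
    (hxc : ∀ t, ¬ IsIsolated (averagedChannel W Qs) (xc m₁ t) (xc m₂ t)) :
    (∃ j, 1 / 2 ≤ errorProb W Qs (xc m₁) g m₁ j) ∨
      ∃ j, 1 / 2 ≤ errorProb W Qs (xc m₂) g m₂ j := by
  choose p r hpr using fun t => exists_mixture_eq_of_not_isIsolated (hxc t)
  have hkernel : IsKernel fun j : T → J =>
      productDist fun t => averagedChannel W Qs (xc m₁ t) (j t) :=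
    fun j => IsPMF.productDist fun t => hQs.mixture fun s => hW (xc m₁ t) s (j t)
  simp only [errorProb_eq_missProb]
  refine exists_half_le_missProb_of_mixture_eq (IsPMF.productDist fun t => (p t).2)
    (IsPMF.productDist fun t => (r t).2) hkernel ?_ g hm
  rw [← productDist_mixture, ← productDist_mixture]
  simp only [hpr]

end Channel

/-- Lemma 2: if the graph of the averaged channel `Q_{Y|XJ}` is
complete-𝒳 (no pair of inputs is isolated), then every code with at least two messages
has maximal error probability at least `1/2`:
`max_{j^n,m} e(m,j^n) ≥ 1/2`. -/
theorem stmt9 {X S J Y : Type*}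
    [Fintype X] [Fintype S] [Fintype J] [Nonempty J] [Fintype Y]
    (W : X → S → J → Y → ℝ) (Qs : S → ℝ)
    (hW : ∀ x s j, IsPMF (W x s j)) (hQs : IsPMF Qs)
    -- the averaged channel Q_{Y|XJ}
    (Qbar : X → J → Y → ℝ) (hQbar : ∀ x j y, Qbar x j y = ∑ s, Qs s * W x s j y)
    -- the graph of Q_{Y|XJ} is complete-𝒳: no pair of inputs is isolated
    (hComplete : ∀ x₁ x₂ : X,
      ¬ (0 < ⨅ qq : PMFt J × PMFt J,
            ∑ y, |∑ j, Qbar x₁ j y * qq.1.1 j - ∑ j, Qbar x₂ j y * qq.2.1 j|))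
    -- an (n,R) code with at least two messages
    (n M : ℕ) (hM : 2 ≤ M)
    (xc : Fin M → Fin n → X) (g : (Fin n → Y) → Fin M) :
    ∃ (j : Fin n → J) (m : Fin M),
      (1 : ℝ) / 2 ≤
        ∑ y : Fin n → Y, ∑ s : Fin n → S,
          (if g y = m then 0 else 1) *
            ((∏ i, Qs (s i)) * ∏ i, W (xc m i) (s i) (j i) (y i)) := by
  obtain rfl : Qbar = averagedChannel W Qs := funext fun x => funext fun j => funext (hQbar x j)
  have hm : (⟨0, by omega⟩ : Fin M) ≠ ⟨1, by omega⟩ := by simp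
  obtain ⟨j, hj⟩ | ⟨j, hj⟩ := stmt9_general W Qs hW hQs xc g hm fun _ => hComplete _ _
  exacts [⟨j, _, hj⟩, ⟨j, _, hj⟩]

end
end

section
/- Let 𝒞 be a codebook of 2^{nR̃} codewords and 𝒞_G ⊆ 𝒞 its subset of good codewords, with |𝒞 ∖ 𝒞_G| ≤ 2^{−nδ}|𝒞| for some δ > 0. Let each codeword be assigned an independent uniformly random bin index in [1:2^{nR}] with R < R̃, set R' = R̃ − R, and let 𝒞(M) denote the bin of a message M. Then for suitable ε > 0 (with 2ε < δ) and all sufficiently large n, Pr{ |(𝒞 ∖ 𝒞_G) ∩ 𝒞(M)| ≤ 2^{−2nε} 2^{nR'} } ≥ 1 − χ_n, where χ_n is double-exponentially small in n. -/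
open scoped BigOperators

noncomputable section

/-
With `R' = Rt - R`, the number of bad codewords falling in a fixed bin is a sum of independent
indicators of mean `2 ^ (-n R)`, so it has expectation at most `2 ^ (n (R' - δ))`. The Chernoff
bound at tilt `log 2`, where the factor `exp t - 1` equals `1`, shows that exceeding the much larger
level `2 ^ (n (R' - 2 ε))` has probability at most `2 ^ (-2 ^ (n c))` for large `n`, as soon as
`c < R' - 2 ε`.
-/

open MeasureTheory ProbabilityTheory Filter

section Chernoff

variable {Ω ι : Type*} [MeasurableSpace Ω] {μ : Measure Ω}

theorem exp_mul_le_one_add_mul_of_mem_Icc {x : ℝ} (hx : x ∈ Set.Icc 0 1) (t : ℝ) :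
    Real.exp (t * x) ≤ 1 + x * (Real.exp t - 1) := by
  have h := convexOn_exp.2 (Set.mem_univ 0) (Set.mem_univ t) (sub_nonneg.mpr hx.2) hx.1
    (sub_add_cancel 1 x)
  simp only [smul_eq_mul, mul_zero, zero_add, Real.exp_zero, mul_one] at h
  rw [mul_comm t]
  linarith

theorem mgf_le_exp_of_mem_Icc [IsProbabilityMeasure μ] {X : Ω → ℝ} (hX : AEMeasurable X μ)
    (hX01 : ∀ᵐ ω ∂μ, X ω ∈ Set.Icc 0 1) (t : ℝ) :
    mgf X μ t ≤ Real.exp ((Real.exp t - 1) * μ[X]) := by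
  have hint : Integrable X μ := .of_mem_Icc 0 1 hX hX01
  calc mgf X μ t ≤ ∫ ω, 1 + X ω * (Real.exp t - 1) ∂μ :=
        integral_mono_ae (integrable_exp_mul_of_mem_Icc hX hX01)
          ((integrable_const 1).add (hint.mul_const _))
          (hX01.mono fun ω hω => exp_mul_le_one_add_mul_of_mem_Icc hω t)
    _ = (Real.exp t - 1) * μ[X] + 1 := by
        rw [integral_add (integrable_const 1) (hint.mul_const _), integral_mul_const]
        simp [mul_comm, add_comm]
    _ ≤ Real.exp ((Real.exp t - 1) * μ[X]) := Real.add_one_le_exp _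

theorem measureReal_sum_ge_le_exp_of_mem_Icc {X : ι → Ω → ℝ} (hindep : iIndepFun X μ)
    (hX : ∀ i, Measurable (X i)) (hX01 : ∀ i, ∀ᵐ ω ∂μ, X i ω ∈ Set.Icc 0 1)
    (s : Finset ι) {t : ℝ} (ht : 0 ≤ t) (a : ℝ) :
    μ.real {ω | a ≤ ∑ i ∈ s, X i ω} ≤
      Real.exp ((Real.exp t - 1) * ∑ i ∈ s, μ[X i] - t * a) := by
  have := hindep.isProbabilityMeasure
  have hint : Integrable (fun ω => Real.exp (t * (∑ i ∈ s, X i) ω)) μ :=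
    hindep.integrable_exp_mul_sum hX fun i _ =>
      integrable_exp_mul_of_mem_Icc (hX i).aemeasurable (hX01 i)
  calc μ.real {ω | a ≤ ∑ i ∈ s, X i ω}
      ≤ Real.exp (-t * a) * mgf (∑ i ∈ s, X i) μ t := by
        simpa only [Finset.sum_apply] using measure_ge_le_exp_mul_mgf a ht hint
    _ = Real.exp (-t * a) * ∏ i ∈ s, mgf (X i) μ t := by rw [hindep.mgf_sum hX]
    _ ≤ Real.exp (-t * a) * ∏ i ∈ s, Real.exp ((Real.exp t - 1) * μ[X i]) := by
        gcongr with i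
        · exact fun i _ => mgf_nonneg
        · exact mgf_le_exp_of_mem_Icc (hX i).aemeasurable (hX01 i) t
    _ = Real.exp ((Real.exp t - 1) * ∑ i ∈ s, μ[X i] - t * a) := by
        rw [← Real.exp_sum, ← Finset.mul_sum, ← Real.exp_add]
        ring_nf

end Chernoff

theorem uniformOn_univ_real_apply {Ω : Type*} [Finite Ω] [MeasurableSpace Ω]
    [MeasurableSingletonClass Ω] (s : Set Ω) :
    (uniformOn (Set.univ : Set Ω)).real s = (Nat.card s : ℝ) / Nat.card Ω := by
  have := Fintype.ofFinite Ω
  rw [measureReal_def, uniformOn_univ, Measure.count_apply s.toFinite.measurableSet,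
    ← s.toFinite.cast_ncard_eq, ENNReal.toReal_div, ENat.toENNReal_coe]
  simp

section RandomBinning

/-- The number of codewords of `S` in bin `m` under the binning `b`, i.e. `|S ∩ 𝒞(m)|` where the
bin `𝒞(m)` is the fiber of `b` over `m`. -/
def binLoad {C B : Type*} (S : Finset C) (b : C → B) (m : B) : ℕ :=
  Nat.card {k // k ∈ S ∧ b k = m}

theorem binLoad_eq_sum_indicator {C B : Type*} (S : Finset C) (b : C → B) (m : B) :
    (binLoad S b m : ℝ) = ∑ k ∈ S, Set.indicator {m} 1 (b k) := by
  classical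
  rw [binLoad, Nat.subtype_card (S.filter (b · = m)) fun k => Finset.mem_filter]
  simp [Set.indicator_apply]

variable {C B : Type*} [Finite C] [Finite B] [MeasurableSpace B] [MeasurableSingletonClass B]

theorem iIndepFun_eval_uniformOn_univ [Nonempty B] :
    iIndepFun (fun (k : C) (b : C → B) => b k) (uniformOn Set.univ) := by
  have := Fintype.ofFinite C
  rw [← Set.pi_univ, uniformOn_pi]
  exact iIndepFun_pi fun _ => aemeasurable_id

theorem integral_indicator_eval_uniformOn_univ [Nonempty B] (k : C) (m : B) :
    ∫ b : C → B, Set.indicator {m} (1 : B → ℝ) (b k) ∂uniformOn Set.univ = (Nat.card B : ℝ)⁻¹ := by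
  have := Fintype.ofFinite C
  have hmeas : Measurable (Set.indicator {m} (1 : B → ℝ)) := .of_discrete
  rw [← Set.pi_univ, uniformOn_pi, integral_comp_eval hmeas.aestronglyMeasurable,
    integral_indicator_one (measurableSet_singleton m), uniformOn_univ_real_apply]
  simp

theorem uniformOn_univ_real_le_binLoad_le_exp [Nonempty B] (S : Finset C) (m : B) {t : ℝ}
    (ht : 0 ≤ t) (a : ℝ) :
    (uniformOn (Set.univ : Set (C → B))).real {b | a ≤ binLoad S b m} ≤
      Real.exp ((Real.exp t - 1) * (S.card / Nat.card B) - t * a) := by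
  have hmeas : Measurable (Set.indicator {m} (1 : B → ℝ)) := .of_discrete
  have h01 (j : B) : Set.indicator {m} (1 : B → ℝ) j ∈ Set.Icc 0 1 :=
    ⟨Set.indicator_nonneg (by simp) j, Set.indicator_le_self' (by simp) j⟩
  have hchernoff := measureReal_sum_ge_le_exp_of_mem_Icc
    (iIndepFun_eval_uniformOn_univ.comp (fun _ : C => Set.indicator {m} (1 : B → ℝ)) fun _ => hmeas)
    (fun k => hmeas.comp (measurable_pi_apply k)) (fun k => ae_of_all _ fun b => h01 (b k)) S ht a
  simpa only [Function.comp_apply, binLoad_eq_sum_indicator,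
    integral_indicator_eval_uniformOn_univ, Finset.sum_const, nsmul_eq_mul,
    ← div_eq_mul_inv] using hchernoff

theorem uniformOn_univ_real_le_binLoad_le_two_rpow_neg [Nonempty B] (S : Finset C) (m : B)
    {y T : ℝ} (hT : 2 * (S.card / Nat.card B) + y ≤ T) :
    (uniformOn (Set.univ : Set (C → B))).real {b | T ≤ binLoad S b m} ≤ (2 : ℝ) ^ (-y) :=
  calc (uniformOn (Set.univ : Set (C → B))).real {b | T ≤ binLoad S b m}
      ≤ Real.exp ((Real.exp (Real.log 2) - 1) * (S.card / Nat.card B) - Real.log 2 * T) :=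
        uniformOn_univ_real_le_binLoad_le_exp S m (Real.log_nonneg one_le_two) T
    _ = Real.exp (S.card / Nat.card B - Real.log 2 * T) := by
        rw [Real.exp_log two_pos]
        ring_nf
    _ ≤ (2 : ℝ) ^ (-y) := by
        rw [Real.rpow_def_of_pos two_pos, Real.exp_le_exp]
        have hmean : (0 : ℝ) ≤ S.card / Nat.card B := by positivity
        have hlog : 1 / 2 ≤ Real.log 2 := by linarith [Real.log_two_gt_d9]
        nlinarith

end RandomBinning

theorem one_sub_two_rpow_neg_le_natCard_binLoad_le_div {C B : Type*} [Finite C] [Finite B]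
    (S : Finset C) (m : B) {y T : ℝ} (hT : 2 * (S.card / Nat.card B) + y ≤ T) :
    1 - (2 : ℝ) ^ (-y) ≤
      (Nat.card {b : C → B // (binLoad S b m : ℝ) ≤ T} : ℝ) / Nat.card (C → B) := by
  have : Nonempty B := ⟨m⟩
  let : MeasurableSpace B := ⊤
  let E : Set (C → B) := {b | (binLoad S b m : ℝ) ≤ T}
  have hcompl : Eᶜ ⊆ {b | T ≤ binLoad S b m} :=
    fun b (hb : ¬(binLoad S b m : ℝ) ≤ T) => le_of_not_ge hb
  have htail : (uniformOn Set.univ).real Eᶜ ≤ (2 : ℝ) ^ (-y) :=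
    (measureReal_mono hcompl).trans (uniformOn_univ_real_le_binLoad_le_two_rpow_neg S m hT)
  rw [probReal_compl_eq_one_sub (Set.toFinite E).measurableSet, uniformOn_univ_real_apply] at htail
  exact sub_le_comm.mp htail

theorem eventually_mul_rpow_le_rpow {x : ℝ} (hx : 1 < x) (K : ℝ) {a b : ℝ} (hab : a < b) :
    ∀ᶠ n : ℕ in atTop, K * x ^ (n * a) ≤ x ^ (n * b) := by
  have hx0 : 0 < x := one_pos.trans hx
  have hlim : Tendsto (fun n : ℕ => x ^ (n * (b - a))) atTop atTop :=
    (tendsto_rpow_atTop_of_base_gt_one x hx).comp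
      (tendsto_natCast_atTop_atTop.atTop_mul_const (sub_pos.mpr hab))
  filter_upwards [hlim.eventually_ge_atTop K] with n hn
  calc K * x ^ (n * a) ≤ x ^ (n * (b - a)) * x ^ (n * a) := by gcongr
    _ = x ^ (n * b) := by rw [← Real.rpow_add hx0]; ring_nf

theorem eventually_one_sub_two_rpow_neg_le_natCard_binLoad_le_div {Rt R δ ε c : ℝ} (hε : 2 * ε < δ)
    (hc : c < Rt - R - 2 * ε) :
    ∀ᶠ n : ℕ in atTop, ∀ {C B : Type*} [Finite C] [Finite B],
      (Nat.card C : ℝ) ≤ (2 : ℝ) ^ (n * Rt) → (2 : ℝ) ^ (n * R) ≤ Nat.card B →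
      ∀ S : Finset C, (S.card : ℝ) ≤ (2 : ℝ) ^ (-n * δ) * Nat.card C → ∀ m : B,
        1 - (2 : ℝ) ^ (-(2 : ℝ) ^ (c * n)) ≤
          (Nat.card {b : C → B // (binLoad S b m : ℝ) ≤
            (2 : ℝ) ^ (-2 * n * ε) * (2 : ℝ) ^ (n * (Rt - R))} : ℝ) / Nat.card (C → B) := by
  filter_upwards [eventually_mul_rpow_le_rpow one_lt_two 4
      (show Rt - R - δ < Rt - R - 2 * ε by linarith),
    eventually_mul_rpow_le_rpow one_lt_two 2 hc] with n hmean hlevel C B _ _ hC hB S hS m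
  apply one_sub_two_rpow_neg_le_natCard_binLoad_le_div
  have hload : (S.card : ℝ) / Nat.card B ≤ (2 : ℝ) ^ (n * (Rt - R - δ)) :=
    calc (S.card : ℝ) / Nat.card B
        ≤ (2 : ℝ) ^ (-n * δ) * (2 : ℝ) ^ (n * Rt) / (2 : ℝ) ^ (n * R) := by
          gcongr
          exact hS.trans (by gcongr)
      _ = (2 : ℝ) ^ (n * (Rt - R - δ)) := by
          rw [← Real.rpow_add two_pos, ← Real.rpow_sub two_pos]
          ring_nf
  calc 2 * ((S.card : ℝ) / Nat.card B) + (2 : ℝ) ^ (c * n)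
      ≤ (2 : ℝ) ^ (n * (Rt - R - 2 * ε)) := by
        rw [mul_comm c]
        linarith
    _ = (2 : ℝ) ^ (-2 * n * ε) * (2 : ℝ) ^ (n * (Rt - R)) := by
        rw [← Real.rpow_add two_pos]
        ring_nf

theorem stmt15_general {Rt R δ : ℝ} (hRt : R < Rt) (hδ : 0 < δ) :
    ∃ ε : ℝ, 0 < ε ∧ 2 * ε < δ ∧ ∃ c : ℝ, 0 < c ∧ ∃ N₀ : ℕ, ∀ n : ℕ, N₀ ≤ n →
      ∀ {C B : Type*} [Finite C] [Finite B],
        (Nat.card C : ℝ) ≤ (2 : ℝ) ^ (n * Rt) → (2 : ℝ) ^ (n * R) ≤ Nat.card B →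
        ∀ Bad : Finset C, (Bad.card : ℝ) ≤ (2 : ℝ) ^ (-n * δ) * Nat.card C → ∀ m : B,
          1 - (2 : ℝ) ^ (-(2 : ℝ) ^ (c * n)) ≤
            (Nat.card {b : C → B // (binLoad Bad b m : ℝ) ≤
              (2 : ℝ) ^ (-2 * n * ε) * (2 : ℝ) ^ (n * (Rt - R))} : ℝ) / Nat.card (C → B) := by
  obtain ⟨ε, hε, hε'⟩ := exists_between (half_pos (lt_min hδ (sub_pos.mpr hRt)))
  obtain ⟨hεδ, hεR⟩ := lt_min_iff.mp ((lt_div_iff₀' two_pos).mp hε')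
  obtain ⟨c, hc, hcR⟩ := exists_between (sub_pos.mpr hεR)
  obtain ⟨N₀, hN₀⟩ :=
    eventually_atTop.mp (eventually_one_sub_two_rpow_neg_le_natCard_binLoad_le_div hεδ hcR)
  exact ⟨ε, hε, hεδ, c, hc, N₀, hN₀⟩

/-- Lemma 11: few bad codewords per bin. If a codebook of `2^{nR̃}`
codewords containing at most a `2^{−nδ}` fraction of bad codewords is independently and
uniformly binned into `2^{nR}` bins (`R < R̃`, `R' = R̃ − R`), then for suitable `ε > 0`
with `2ε < δ` and all sufficiently large `n`, each bin contains at most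
`2^{−2nε} 2^{nR'}` bad codewords except with double-exponentially small probability. -/
theorem stmt15 (Rt R δ : ℝ) (hR : 0 < R) (hRt : R < Rt) (hδ : 0 < δ) :
    ∃ ε : ℝ, 0 < ε ∧ 2 * ε < δ ∧
      ∃ c : ℝ, 0 < c ∧ ∃ N₀ : ℕ, ∀ n : ℕ, N₀ ≤ n →
        ∀ (Nc Mb : ℕ), (Nc : ℝ) = (2 : ℝ) ^ ((n : ℝ) * Rt) →
          (Mb : ℝ) = (2 : ℝ) ^ ((n : ℝ) * R) →
          -- `Bad` is the set of bad codewords, an exponentially small fraction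
          ∀ Bad : Finset (Fin Nc), (Bad.card : ℝ) ≤ (2 : ℝ) ^ (-(n : ℝ) * δ) * (Nc : ℝ) →
          ∀ m : Fin Mb,
            1 - (2 : ℝ) ^ (-(2 : ℝ) ^ (c * (n : ℝ))) ≤
              (Nat.card {b : Fin Nc → Fin Mb //
                  (Nat.card {k : Fin Nc // k ∈ Bad ∧ b k = m} : ℝ) ≤
                    (2 : ℝ) ^ (-2 * (n : ℝ) * ε) * (2 : ℝ) ^ ((n : ℝ) * (Rt - R))} : ℝ) /
                (Nat.card (Fin Nc → Fin Mb) : ℝ) := by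
  obtain ⟨ε, hε, hεδ, c, hc, N₀, h⟩ := stmt15_general hRt hδ
  exact ⟨ε, hε, hεδ, c, hc, N₀, fun n hn Nc Mb hNc hMb => by
    simpa [binLoad, hNc, hMb] using h n hn (C := Fin Nc) (B := Fin Mb)⟩

end
end
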